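/- arXiv:2207.09826 — 2 statements merged into one kernel-verified Lean document; each statement's English description precedes it below -/
import Mathlib

section
/- Let G be a simple graph on the grid vertex set V = Fin m × Fin n. (i) If the signless Laplacian Q(G), regarded as a complex matrix, is separable, and there exists a vector v : V → ℝ with v(u) ∈ {−1, 1} for every u ∈ V and Q(G^Γ)·v = 0, then D(G) = D(G^Γ). (ii) Likewise for the signed Laplacian: if L(G), regarded as a complex matrix, is separable, and there exists v : V → ℝ with all entries in {−1, 1} and L(G^Γ)·v = 0, then D(G) = D(G^Γ). -/
open Matrix

-- Adjacency matrix of a simple graph, with real entries.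
open scoped Classical in
noncomputable def adjM {V : Type*} [Fintype V] (G : SimpleGraph V) : Matrix V V ℝ :=
  Matrix.of fun u v => if G.Adj u v then 1 else 0

-- Degree matrix of a simple graph: diagonal, with the vertex degrees on the diagonal.
open scoped Classical in
noncomputable def degM {V : Type*} [Fintype V] [DecidableEq V] (G : SimpleGraph V) :
    Matrix V V ℝ :=
  Matrix.diagonal fun v => ∑ u, if G.Adj v u then (1 : ℝ) else 0

/-- Signed Laplacian `L = D - A`. -/
noncomputable def lapL {V : Type*} [Fintype V] [DecidableEq V] (G : SimpleGraph V) :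
    Matrix V V ℝ :=
  degM G - adjM G

/-- Signless Laplacian `Q = D + A`. -/
noncomputable def lapQ {V : Type*} [Fintype V] [DecidableEq V] (G : SimpleGraph V) :
    Matrix V V ℝ :=
  degM G + adjM G

/-- Partial transpose graph: `(i,j) ~ (k,l)` iff `(i,l) ~ (k,j)` in `G`. -/
def ptGraph {m n : ℕ} (G : SimpleGraph (Fin m × Fin n)) : SimpleGraph (Fin m × Fin n) where
  Adj p q := G.Adj (p.1, q.2) (q.1, p.2)
  symm := ⟨fun _ _ h => G.symm.symm _ _ h⟩
  loopless := ⟨fun p h => G.loopless.irrefl p h⟩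

/-- Separability of a `V × V` complex matrix, `V = Fin m × Fin n`. -/
def MatrixIsSeparable {m n : ℕ} (ρ : Matrix (Fin m × Fin n) (Fin m × Fin n) ℂ) : Prop :=
  ∃ (T : Finset ℕ) (x : ℕ → Fin m → ℂ) (y : ℕ → Fin n → ℂ),
    ∀ (i k : Fin m) (j l : Fin n),
      ρ (i, j) (k, l) = ∑ t ∈ T, x t i * star (x t k) * (y t j * star (y t l))

/-!
Write `M = D(G) + s A(G)`, with `s = 1` for `Q(G)` and `s = -1` for `L(G)`. The partial transpose
`N = D(G) + s A(G^Γ)` of `M` is positive semidefinite when `M` is separable, and it differs from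
the Laplacian of `G^Γ` only by the diagonal matrix `D(G) - D(G^Γ)`. This difference has trace
zero, because `G` and `G^Γ` have equally many edges, so a `±1` vector `v` annihilated by the
Laplacian of `G^Γ` satisfies `vᵀ N v = 0`. Positivity upgrades this to `N v = 0`, that is
`D(G) v = D(G^Γ) v`, and `v` has no zero entry.
-/

section PartialTranspose

variable {α β γ δ R S : Type*}

/-- The partial transpose of a matrix with rows and columns indexed by products: the second
components of the row and column indices are exchanged. On square matrices this is the operation
behind the Peres–Horodecki (PPT) criterion. -/
def partialTranspose (M : Matrix (α × β) (γ × δ) R) : Matrix (α × δ) (γ × β) R :=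
  Matrix.of fun p q => M (p.1, q.2) (q.1, p.2)

lemma partialTranspose_apply (M : Matrix (α × β) (γ × δ) R) (i : α) (j : δ) (k : γ) (l : β) :
    partialTranspose M (i, j) (k, l) = M (i, l) (k, j) :=
  rfl

lemma partialTranspose_add [Add R] (M N : Matrix (α × β) (γ × δ) R) :
    partialTranspose (M + N) = partialTranspose M + partialTranspose N :=
  rfl

lemma partialTranspose_smul [SMul S R] (s : S) (M : Matrix (α × β) (γ × δ) R) :
    partialTranspose (s • M) = s • partialTranspose M :=
  rfl

lemma partialTranspose_map (M : Matrix (α × β) (γ × δ) R) (f : R → S) :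
    partialTranspose (M.map f) = (partialTranspose M).map f :=
  rfl

lemma partialTranspose_diagonal [DecidableEq α] [DecidableEq β] [Zero R] (d : α × β → R) :
    partialTranspose (diagonal d) = diagonal d := by
  ext ⟨i, j⟩ ⟨k, l⟩
  by_cases hjl : j = l
  · subst hjl
    rfl
  · simp [partialTranspose_apply, hjl, Ne.symm hjl]

lemma sum_sum_partialTranspose [Fintype α] [Fintype β] [Fintype γ] [Fintype δ] [AddCommMonoid R]
    (M : Matrix (α × β) (γ × δ) R) :
    ∑ p, ∑ q, partialTranspose M p q = ∑ p, ∑ q, M p q := by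
  simp only [Fintype.sum_prod_type, partialTranspose_apply]
  refine Finset.sum_congr rfl fun i _ => ?_
  calc ∑ j, ∑ k, ∑ l, M (i, l) (k, j)
      = ∑ j, ∑ l, ∑ k, M (i, l) (k, j) := Finset.sum_congr rfl fun _ _ => Finset.sum_comm
    _ = ∑ l, ∑ j, ∑ k, M (i, l) (k, j) := Finset.sum_comm
    _ = ∑ l, ∑ k, ∑ j, M (i, l) (k, j) := Finset.sum_congr rfl fun _ _ => Finset.sum_comm

end PartialTranspose

section PosSemidef

open scoped ComplexOrder

variable {𝕜 V : Type*} [RCLike 𝕜]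

lemma posSemidef_of_posSemidef_map_ofReal {M : Matrix V V ℝ}
    (hM : (M.map fun a => (a : 𝕜)).PosSemidef) : M.PosSemidef := by
  refine ⟨?_, fun v => ?_⟩
  · ext i j
    exact RCLike.ofReal_injective (K := 𝕜) (by simpa using hM.isHermitian.apply i j)
  · have hv := hM.2 (v.mapRange (fun a : ℝ => (a : 𝕜)) RCLike.ofReal_zero)
    simp only [Finsupp.sum_mapRange_index, map_zero, zero_mul, mul_zero, Finsupp.sum_fun_zero,
      implies_true, Matrix.map_apply, RCLike.star_def, RCLike.conj_ofReal] at hv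
    simp only [Finsupp.sum, star_trivial] at hv ⊢
    exact_mod_cast hv

lemma mulVec_eq_mulVec_of_posSemidef_add [Fintype V] {D D' B : Matrix V V 𝕜} {v : V → 𝕜}
    (hpos : (D + B).PosSemidef) (hker : (D' + B) *ᵥ v = 0)
    (hle : star v ⬝ᵥ D *ᵥ v ≤ star v ⬝ᵥ D' *ᵥ v) : D *ᵥ v = D' *ᵥ v := by
  have hdiff : (D + B) *ᵥ v = D *ᵥ v - D' *ᵥ v := by
    rw [add_mulVec] at hker ⊢
    rw [eq_neg_of_add_eq_zero_right hker, sub_eq_add_neg]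
  have hform : star v ⬝ᵥ (D + B) *ᵥ v = 0 := by
    refine le_antisymm ?_ (hpos.dotProduct_mulVec_nonneg v)
    rwa [hdiff, dotProduct_sub, sub_nonpos]
  rwa [hpos.dotProduct_mulVec_zero_iff, hdiff, sub_eq_zero] at hform

end PosSemidef

lemma dotProduct_diagonal_mulVec_of_mul_self_eq_one {V R : Type*} [Fintype V] [DecidableEq V]
    [CommSemiring R] {v : V → R} (hv : ∀ i, v i * v i = 1) (d : V → R) :
    v ⬝ᵥ diagonal d *ᵥ v = (diagonal d).trace := by
  rw [trace_diagonal]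
  refine Finset.sum_congr rfl fun i _ => ?_
  rw [mulVec_diagonal, mul_left_comm, hv, mul_one]

lemma diagonal_eq_of_diagonal_mulVec_eq {V R : Type*} [Fintype V] [DecidableEq V]
    [NonUnitalNonAssocSemiring R] [IsRightCancelMulZero R] {d d' v : V → R} (hv : ∀ i, v i ≠ 0)
    (h : diagonal d *ᵥ v = diagonal d' *ᵥ v) : diagonal d = diagonal d' := by
  refine congrArg diagonal (funext fun i => mul_right_cancel₀ (hv i) ?_)
  simpa only [mulVec_diagonal] using congrFun h i

section Separable

open scoped ComplexOrder

variable {m n : ℕ} {ρ : Matrix (Fin m × Fin n) (Fin m × Fin n) ℂ}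

lemma MatrixIsSeparable.posSemidef (hρ : MatrixIsSeparable ρ) : ρ.PosSemidef := by
  obtain ⟨T, x, y, hxy⟩ := hρ
  let z (t : ℕ) (p : Fin m × Fin n) : ℂ := x t p.1 * y t p.2
  have hz : ρ = ∑ t ∈ T, vecMulVec (z t) (star (z t)) := by
    ext ⟨i, j⟩ ⟨k, l⟩
    simp only [hxy, Matrix.sum_apply, vecMulVec_apply, Pi.star_apply, z, star_mul',
      mul_mul_mul_comm]
  rw [hz]
  exact posSemidef_sum T fun t _ => posSemidef_vecMulVec_self_star (z t)

-- The partial transpose of `x xᴴ ⊗ y yᴴ` is `x xᴴ ⊗ ȳ ȳᴴ`.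
lemma MatrixIsSeparable.partialTranspose (hρ : MatrixIsSeparable ρ) :
    MatrixIsSeparable (partialTranspose ρ) := by
  obtain ⟨T, x, y, hxy⟩ := hρ
  refine ⟨T, x, fun t => star (y t), fun i k j l => ?_⟩
  simp only [partialTranspose_apply, hxy, Pi.star_apply, star_star, mul_comm (y _ l)]

lemma MatrixIsSeparable.posSemidef_partialTranspose_of_map_ofReal
    {M : Matrix (Fin m × Fin n) (Fin m × Fin n) ℝ}
    (hM : MatrixIsSeparable (M.map fun a => (a : ℂ))) :
    (_root_.partialTranspose M).PosSemidef := by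
  have hpos := hM.partialTranspose.posSemidef
  rw [partialTranspose_map] at hpos
  exact posSemidef_of_posSemidef_map_ofReal hpos

end Separable

section Laplacian

variable {V : Type*} [Fintype V] [DecidableEq V] (G : SimpleGraph V)

lemma lapQ_eq_degM_add_smul_adjM : lapQ G = degM G + (1 : ℝ) • adjM G := by
  rw [one_smul, lapQ]

lemma lapL_eq_degM_add_smul_adjM : lapL G = degM G + (-1 : ℝ) • adjM G := by
  rw [neg_one_smul, ← sub_eq_add_neg, lapL]

lemma trace_degM : (degM G).trace = ∑ u, ∑ v, adjM G u v :=
  trace_diagonal _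

end Laplacian

section PartialTransposeGraph

variable {m n : ℕ} (G : SimpleGraph (Fin m × Fin n))

lemma adjM_ptGraph : adjM (ptGraph G) = partialTranspose (adjM G) :=
  rfl

lemma trace_degM_ptGraph : (degM (ptGraph G)).trace = (degM G).trace := by
  rw [trace_degM, trace_degM, adjM_ptGraph, sum_sum_partialTranspose]

lemma partialTranspose_degM_add_smul_adjM (s : ℝ) :
    partialTranspose (degM G + s • adjM G) = degM G + s • adjM (ptGraph G) := by
  rw [partialTranspose_add, partialTranspose_smul, ← adjM_ptGraph, degM, partialTranspose_diagonal]

theorem degree_criterion_applicability_general (s : ℝ)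
    (hpos : (partialTranspose (degM G + s • adjM G)).PosSemidef)
    {v : Fin m × Fin n → ℝ} (hv : ∀ u, v u = 1 ∨ v u = -1)
    (hker : (degM (ptGraph G) + s • adjM (ptGraph G)) *ᵥ v = 0) :
    degM G = degM (ptGraph G) := by
  have hsq (u) : v u * v u = 1 := mul_self_eq_one_iff.mpr (hv u)
  have hform : star v ⬝ᵥ degM G *ᵥ v = star v ⬝ᵥ degM (ptGraph G) *ᵥ v := by
    calc v ⬝ᵥ degM G *ᵥ v
        = (degM G).trace := dotProduct_diagonal_mulVec_of_mul_self_eq_one hsq _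
      _ = (degM (ptGraph G)).trace := (trace_degM_ptGraph G).symm
      _ = v ⬝ᵥ degM (ptGraph G) *ᵥ v :=
        (dotProduct_diagonal_mulVec_of_mul_self_eq_one hsq _).symm
  rw [partialTranspose_degM_add_smul_adjM] at hpos
  exact diagonal_eq_of_diagonal_mulVec_eq (fun u => left_ne_zero_of_mul_eq_one (hsq u))
    (mulVec_eq_mulVec_of_posSemidef_add hpos hker hform.le)

end PartialTransposeGraph

/-- If the (signless resp. signed) Laplacian of a grid-labelled graph is separable and the
Laplacian of the partial transpose graph annihilates a `±1` vector, then the degree matrices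
of the graph and of its partial transpose coincide. -/
theorem degree_criterion_applicability (m n : ℕ) (G : SimpleGraph (Fin m × Fin n)) :
    ((MatrixIsSeparable ((lapQ G).map fun a => (a : ℂ)) →
        (∃ v : Fin m × Fin n → ℝ, (∀ u, v u = 1 ∨ v u = -1) ∧
          (lapQ (ptGraph G)).mulVec v = 0) →
        degM G = degM (ptGraph G)) ∧
     (MatrixIsSeparable ((lapL G).map fun a => (a : ℂ)) →
        (∃ v : Fin m × Fin n → ℝ, (∀ u, v u = 1 ∨ v u = -1) ∧
          (lapL (ptGraph G)).mulVec v = 0) →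
        degM G = degM (ptGraph G))) := by
  simp only [lapQ_eq_degM_add_smul_adjM, lapL_eq_degM_add_smul_adjM]
  constructor <;> exact fun hsep ⟨_, hv, hker⟩ => degree_criterion_applicability_general G _
    hsep.posSemidef_partialTranspose_of_map_ofReal hv hker
end

section
/- Let (S_l, S_q) be a hybrid graph on a finite vertex type V satisfying the COI condition with coloring c : V → Bool, and let U be the union graph on V (u adjacent to v in U iff u,v are adjacent in S_l or in S_q). For each connected component C of U define v_C : V → ℝ by v_C(u) = 1 if u ∈ C and c(u) = true, v_C(u) = −1 if u ∈ C and c(u) = false, and v_C(u) = 0 if u ∉ C. Then the family (v_C), indexed by the connected components of U, is a basis of the kernel {x : V → ℝ | (L(S_l) + Q(S_q))·x = 0} of the hybrid Laplacian, regarded as an ℝ-subspace of V → ℝ. -/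
open Matrix

/-- The two subgraphs of a hybrid graph have disjoint edge sets. -/
def EdgeDisjoint {V : Type*} (Sl Sq : SimpleGraph V) : Prop :=
  ∀ u v, ¬ (Sl.Adj u v ∧ Sq.Adj u v)

-- The vector associated to a connected component `C` of a graph `U` and a coloring `c`:
-- `1` on vertices of `C` colored `true`, `-1` on vertices of `C` colored `false`, `0` outside.
open scoped Classical in
noncomputable def compVec {V : Type*} (U : SimpleGraph V) (c : V → Bool)
    (C : U.ConnectedComponent) : V → ℝ :=
  fun u => if U.connectedComponentMk u = C then (if c u then 1 else -1) else 0

/-! The coloring makes `S = diag (±1)` an involution with `S (L(S_l) + Q(S_q)) S = L(S_l ⊔ S_q)`: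
conjugation by `S` fixes degree matrices, fixes the adjacency matrix of `S_l` and negates that of
`S_q`. Hence `S` maps the kernel of the ordinary Laplacian of the union isomorphically onto the
kernel of the hybrid Laplacian, and it carries the well-known basis of component indicators to the
component vectors. -/

theorem disjoint_of_coloring {V α : Type*} {G H : SimpleGraph V} {c : V → α}
    (hG : ∀ u v, G.Adj u v → c u = c v) (hH : ∀ u v, H.Adj u v → c u ≠ c v) : Disjoint G H :=
  SimpleGraph.disjoint_left.mpr fun u v hGuv hHuv => hH u v hHuv (hG u v hGuv)

section DisjointUnion

variable {V R : Type*} {G H : SimpleGraph V} [DecidableRel G.Adj] [DecidableRel H.Adj]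
  [DecidableRel (G ⊔ H).Adj]

theorem adjMatrix_sup_of_disjoint [AddZeroClass R] [One R] (hGH : Disjoint G H) :
    (G ⊔ H).adjMatrix R = G.adjMatrix R + H.adjMatrix R := by
  ext u v
  have hnot := SimpleGraph.disjoint_left.mp hGH u v
  by_cases hG : G.Adj u v <;> simp_all [SimpleGraph.adjMatrix_apply]

variable [Fintype V] [DecidableEq V]

theorem degMatrix_sup_of_disjoint [AddCommMonoidWithOne R] (hGH : Disjoint G H) :
    (G ⊔ H).degMatrix R = G.degMatrix R + H.degMatrix R := by
  have hdegree (v : V) : ((G ⊔ H).degree v : R) = G.degree v + H.degree v := by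
    simp_rw [SimpleGraph.degree_eq_sum_if_adj, ← SimpleGraph.adjMatrix_apply,
      adjMatrix_sup_of_disjoint hGH, Matrix.add_apply, Finset.sum_add_distrib]
  simp only [SimpleGraph.degMatrix, hdegree, diagonal_add]

theorem lapMatrix_sup_of_disjoint [AddCommGroupWithOne R] (hGH : Disjoint G H) :
    (G ⊔ H).lapMatrix R = G.lapMatrix R + H.lapMatrix R := by
  simp only [SimpleGraph.lapMatrix, adjMatrix_sup_of_disjoint hGH, degMatrix_sup_of_disjoint hGH,
    add_sub_add_comm]

end DisjointUnion

section DiagonalConjugation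

variable {V R : Type*} [Fintype V] [DecidableEq V] [Semiring R] {s : V → R}

theorem diagonal_mul_self_eq_one (hs : ∀ v, s v * s v = 1) : diagonal s * diagonal s = 1 := by
  simp only [diagonal_mul_diagonal, hs, diagonal_one]

variable (G : SimpleGraph V) [DecidableRel G.Adj]

theorem diagonal_conj_degMatrix (hs : ∀ v, s v * s v = 1) :
    diagonal s * G.degMatrix R * diagonal s = G.degMatrix R := by
  have hcancel (v : V) : s v * G.degree v * s v = G.degree v := by
    rw [← Nat.cast_comm, mul_assoc, hs, mul_one]
  simp only [SimpleGraph.degMatrix, diagonal_mul_diagonal, hcancel]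

theorem diagonal_conj_adjMatrix {ε : R} (hs : ∀ u v, G.Adj u v → s u * s v = ε) :
    diagonal s * G.adjMatrix R * diagonal s = ε • G.adjMatrix R := by
  ext u v
  rw [mul_diagonal, diagonal_mul, Matrix.smul_apply, SimpleGraph.adjMatrix_apply]
  by_cases h : G.Adj u v <;> simp [h, hs]

end DiagonalConjugation

section Kernel

variable {m n R : Type*} [Fintype m] [DecidableEq m] [Fintype n] [DecidableEq n] [CommSemiring R]
  {S : Matrix m n R} {T : Matrix n m R}

theorem ker_toLin'_conj (A : Matrix m m R) (hST : S * T = 1) (hTS : T * S = 1) :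
    LinearMap.ker (toLin' (T * A * S)) =
      (LinearMap.ker (toLin' A)).comap (toLin'OfInv hTS hST).toLinearMap := by
  have hfactor : toLin' (T * A * S) =
      (toLin'OfInv hST hTS).toLinearMap ∘ₗ toLin' A ∘ₗ (toLin'OfInv hTS hST).toLinearMap := by
    rw [toLin'_mul, toLin'_mul, LinearMap.comp_assoc]
    rfl
  rw [hfactor, LinearEquiv.ker_comp, LinearMap.ker_comp]

variable {A : Matrix m m R} {B : Matrix n n R}

/-- Multiplication by `S`, as an isomorphism from the kernel of `B = T A S` onto the kernel of `A`,
where `T` is the inverse of `S`. -/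
noncomputable def kerEquivOfConj (hST : S * T = 1) (hTS : T * S = 1) (hTAS : T * A * S = B) :
    LinearMap.ker (toLin' B) ≃ₗ[R] LinearMap.ker (toLin' A) :=
  LinearEquiv.ofEq _ _ (hTAS ▸ ker_toLin'_conj A hST hTS) ≪≫ₗ
    (toLin'OfInv hTS hST).ofSubmodule' (LinearMap.ker (toLin' A))

theorem coe_kerEquivOfConj_apply (hST : S * T = 1) (hTS : T * S = 1) (hTAS : T * A * S = B)
    (x : LinearMap.ker (toLin' B)) : (kerEquivOfConj hST hTS hTAS x : m → R) = S *ᵥ x :=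
  rfl

end Kernel

section GraphMatrices

variable {V : Type*} [Fintype V] (G : SimpleGraph V) [DecidableRel G.Adj]

theorem adjM_eq_adjMatrix : adjM G = G.adjMatrix ℝ := by
  ext u v
  simp [adjM, SimpleGraph.adjMatrix_apply]

variable [DecidableEq V]

theorem degM_eq_degMatrix : degM G = G.degMatrix ℝ := by
  simp only [degM, SimpleGraph.degMatrix, SimpleGraph.degree_eq_sum_if_adj]
  congr!

theorem coe_lapMatrix_ker_basis_apply [DecidableEq G.ConnectedComponent]
    (C : G.ConnectedComponent) :
    (G.lapMatrix_ker_basis C : V → ℝ) = fun v => if G.connectedComponentMk v = C then 1 else 0 := by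
  rw [SimpleGraph.lapMatrix_ker_basis, Module.Basis.mk_apply, SimpleGraph.lapMatrix_ker_basis_aux]

end GraphMatrices

section ColorSign

variable {V : Type*} (c : V → Bool)

/-- The sign vector of a two-coloring: `1` on color `true` and `-1` on color `false`. It is the
diagonal of the matrix that switches the hybrid Laplacian to an ordinary one. -/
noncomputable def colorSign (v : V) : ℝ := if c v then 1 else -1

variable {c} {u v : V}

theorem colorSign_mul_of_eq (h : c u = c v) : colorSign c u * colorSign c v = 1 := by
  cases hv : c v <;> simp [colorSign, h, hv]

theorem colorSign_mul_of_ne (h : c u ≠ c v) : colorSign c u * colorSign c v = -1 := by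
  cases hv : c v <;> simp_all [colorSign]

variable [Fintype V] [DecidableEq V]

theorem diagonal_colorSign_mul_self : diagonal (colorSign c) * diagonal (colorSign c) = 1 :=
  diagonal_mul_self_eq_one fun _ => colorSign_mul_of_eq rfl

theorem diagonal_colorSign_mulVec_indicator (U : SimpleGraph V)
    [DecidableEq U.ConnectedComponent] (C : U.ConnectedComponent) :
    diagonal (colorSign c) *ᵥ (fun v => if U.connectedComponentMk v = C then 1 else 0) =
      compVec U c C := by
  ext v
  by_cases h : U.connectedComponentMk v = C <;> simp [mulVec_diagonal, compVec, colorSign, h]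

section Conjugation

variable {G : SimpleGraph V} [DecidableRel G.Adj]

theorem diagonal_colorSign_conj_lapL (hG : ∀ u v, G.Adj u v → c u = c v) :
    diagonal (colorSign c) * lapL G * diagonal (colorSign c) = G.lapMatrix ℝ := by
  rw [lapL, degM_eq_degMatrix, adjM_eq_adjMatrix, mul_sub, sub_mul,
    diagonal_conj_degMatrix G fun _ => colorSign_mul_of_eq rfl,
    diagonal_conj_adjMatrix G fun u v h => colorSign_mul_of_eq (hG u v h), one_smul,
    SimpleGraph.lapMatrix]

theorem diagonal_colorSign_conj_lapQ (hG : ∀ u v, G.Adj u v → c u ≠ c v) :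
    diagonal (colorSign c) * lapQ G * diagonal (colorSign c) = G.lapMatrix ℝ := by
  rw [lapQ, degM_eq_degMatrix, adjM_eq_adjMatrix, mul_add, add_mul,
    diagonal_conj_degMatrix G fun _ => colorSign_mul_of_eq rfl,
    diagonal_conj_adjMatrix G fun u v h => colorSign_mul_of_ne (hG u v h), neg_one_smul,
    ← sub_eq_add_neg, SimpleGraph.lapMatrix]

end Conjugation

theorem diagonal_colorSign_conj_hybrid {Sl Sq : SimpleGraph V} [DecidableRel (Sl ⊔ Sq).Adj]
    (hl : ∀ u v, Sl.Adj u v → c u = c v) (hq : ∀ u v, Sq.Adj u v → c u ≠ c v) :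
    diagonal (colorSign c) * (lapL Sl + lapQ Sq) * diagonal (colorSign c) =
      (Sl ⊔ Sq).lapMatrix ℝ := by
  classical
  rw [mul_add, add_mul, diagonal_colorSign_conj_lapL hl, diagonal_colorSign_conj_lapQ hq,
    lapMatrix_sup_of_disjoint (disjoint_of_coloring hl hq)]

end ColorSign

/-- For a COI hybrid graph `(S_l, S_q)` with coloring `c`, the family of component vectors of
the union graph `S_l ⊔ S_q` is a basis of the kernel of the hybrid Laplacian
`L(S_l) + Q(S_q)`. -/
theorem hybrid_compVec_basis_of_kernel {V : Type*} [Fintype V] [DecidableEq V]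
    (Sl Sq : SimpleGraph V) (hdisj : EdgeDisjoint Sl Sq) (c : V → Bool)
    (hq : ∀ u v, Sq.Adj u v → c u ≠ c v) (hl : ∀ u v, Sl.Adj u v → c u = c v) :
    (∀ C : (Sl ⊔ Sq).ConnectedComponent,
        compVec (Sl ⊔ Sq) c C ∈ LinearMap.ker (lapL Sl + lapQ Sq).mulVecLin) ∧
    ∃ b : Module.Basis (Sl ⊔ Sq).ConnectedComponent ℝ (LinearMap.ker (lapL Sl + lapQ Sq).mulVecLin),
      ∀ C : (Sl ⊔ Sq).ConnectedComponent, (b C : V → ℝ) = compVec (Sl ⊔ Sq) c C := by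
  classical
  rw [← toLin'_apply']
  let switch := kerEquivOfConj diagonal_colorSign_mul_self diagonal_colorSign_mul_self
    (diagonal_colorSign_conj_hybrid hl hq)
  let b := (Sl ⊔ Sq).lapMatrix_ker_basis.map switch
  have coe_b (C : (Sl ⊔ Sq).ConnectedComponent) : (b C : V → ℝ) = compVec (Sl ⊔ Sq) c C := by
    rw [Module.Basis.map_apply, coe_kerEquivOfConj_apply, coe_lapMatrix_ker_basis_apply,
      diagonal_colorSign_mulVec_indicator]
  exact ⟨fun C => coe_b C ▸ (b C).2, b, coe_b⟩
end
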